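/- (Gale duality exchanges feasible and bounded chambers; Farkas form.) For every linear subspace W ⊆ ℝ^E, every h ∈ ℝ^E and every sign vector α : E → {+1,−1}, the following are equivalent: (i) α is h-feasible, i.e. there exists v ∈ ℝ^E with v − h ∈ Wᗮ and α(e)·v(e) ≥ 0 for all e ∈ E; (ii) the linear functional u ↦ ⟨−h, u⟩ is bounded above on the cone { u ∈ W : α(e)·u(e) ≥ 0 for all e ∈ E }, equivalently ⟨h, u⟩ ≥ 0 for every u ∈ W satisfying α(e)·u(e) ≥ 0 for all e ∈ E. In other words, under Gale duality (which replaces W by Wᗮ and the parameter h by −h), a sign vector is feasible for an arrangement if and only if it is bounded for the Gale dual arrangement. -/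

import Mathlib

/-!
The equivalence is the Farkas lemma for the coordinate functionals `u ↦ α e * u e` restricted
to `W`. If `⟨h, ·⟩` is nonnegative on the cone they cut out, then `farkas` writes it on `W` as
`∑ c e * (α e * u e)` with `c ≥ 0`, and `v e = α e * c e` is a point of the chamber. Conversely,
a feasible `v` satisfies `⟨h, u⟩ = ⟨v, u⟩` on `W`, which is a sum of products of numbers of equal
sign. Boundedness above of `⟨-h, ·⟩` on a cone amounts to nonpositivity, by scaling.
-/

/-- The standard inner product on `ℝ^E`. -/
noncomputable def dot {E : Type*} [Fintype E] (x y : E → ℝ) : ℝ := ∑ e, x e * y e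

/-- The orthogonal complement of a subspace `W ⊆ ℝ^E` with respect to the
standard inner product. -/
def perp {E : Type*} [Fintype E] (W : Submodule ℝ (E → ℝ)) : Set (E → ℝ) :=
  {u | ∀ w ∈ W, dot w u = 0}

/-- A sign vector `α` is `h`-feasible if there exists `v ∈ ℝ^E` with `v - h ∈ Wᗮ`
and `α e * v e ≥ 0` for all `e`. -/
def IsFeasible {E : Type*} [Fintype E] (W : Submodule ℝ (E → ℝ)) (h α : E → ℝ) : Prop :=
  ∃ v : E → ℝ, v - h ∈ perp W ∧ ∀ e, 0 ≤ α e * v e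

/-- Farkas lemma for finitely many linear functionals on an arbitrary real vector space. No
topology is needed: in the inductive step, if the new functional `f a` is really used, some `x`
has `f a x = -1`, and the projection `y ↦ y + f a y • x` onto `ker (f a)` along `x` reduces to
the functionals `f i + f i x • f a`. -/
theorem farkas {ι V : Type*} [AddCommGroup V] [Module ℝ V] (s : Finset ι) :
    ∀ (f : ι → V →ₗ[ℝ] ℝ) (φ : V →ₗ[ℝ] ℝ), (∀ y, (∀ i ∈ s, 0 ≤ f i y) → 0 ≤ φ y) →
      ∃ c : ι → ℝ, (∀ i, 0 ≤ c i) ∧ ∀ y, φ y = ∑ i ∈ s, c i * f i y := by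
  classical
  induction s using Finset.induction_on with
  | empty =>
    intro f φ hφ
    refine ⟨0, fun _ => le_rfl, fun y => ?_⟩
    have h1 := hφ y (by simp)
    have h2 := hφ (-y) (by simp)
    rw [map_neg] at h2
    simp only [Finset.sum_empty]
    linarith
  | insert a s ha ih =>
    intro f φ hφ
    by_cases hs : ∀ y, (∀ i ∈ s, 0 ≤ f i y) → 0 ≤ φ y
    · obtain ⟨c, hc, hsum⟩ := ih f φ hs
      refine ⟨Function.update c a 0, fun i => ?_, fun y => ?_⟩
      · by_cases hi : i = a
        · simp [hi]
        · simp [hi, hc]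
      · rw [Finset.sum_insert ha, hsum y]
        simp only [Function.update_self, zero_mul, zero_add]
        refine Finset.sum_congr rfl fun i hi => ?_
        rw [Function.update_of_ne (ne_of_mem_of_not_mem hi ha)]
    · push Not at hs
      obtain ⟨x₀, hx₀, hneg⟩ := hs
      have hfa : f a x₀ < 0 := by
        by_contra! hfa
        exact hneg.not_ge (hφ x₀ (by simpa [hfa] using hx₀))
      obtain ⟨x, hx, hφx, hax⟩ :
          ∃ x, (∀ i ∈ s, 0 ≤ f i x) ∧ φ x ≤ 0 ∧ f a x = -1 := by
        have ht : 0 ≤ -(f a x₀)⁻¹ := by simpa using hfa.le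
        refine ⟨(-(f a x₀)⁻¹) • x₀, fun i hi => ?_, ?_, ?_⟩
        · rw [map_smul, smul_eq_mul]
          exact mul_nonneg ht (hx₀ i hi)
        · rw [map_smul, smul_eq_mul]
          exact mul_nonpos_of_nonneg_of_nonpos ht hneg.le
        · rw [map_smul, smul_eq_mul, neg_mul, inv_mul_cancel₀ hfa.ne]
      obtain ⟨c, hc, hsum⟩ := ih (fun i => f i + f i x • f a) (φ + φ x • f a) (by
        intro y hy
        have key := hφ (y + f a y • x) (by
          intro i hi
          rcases Finset.mem_insert.1 hi with rfl | hi
          · simp [hax]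
          · have := hy i hi
            simp only [LinearMap.add_apply, LinearMap.smul_apply, smul_eq_mul, map_add,
              map_smul] at this ⊢
            linarith)
        simp only [LinearMap.add_apply, LinearMap.smul_apply, smul_eq_mul, map_add,
          map_smul] at key ⊢
        linarith)
      -- The coefficient of `f a` comes from expanding `φ + φ x • f a = ∑ c i • (f i + f i x • f a)`.
      refine ⟨Function.update c a (∑ i ∈ s, c i * f i x - φ x), fun i => ?_, fun y => ?_⟩
      · by_cases hi : i = a
        · have := Finset.sum_nonneg fun i hi => mul_nonneg (hc i) (hx i hi)
          subst hi
          rw [Function.update_self]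
          linarith
        · simp [hi, hc]
      · have hy := hsum y
        simp only [LinearMap.add_apply, LinearMap.smul_apply, smul_eq_mul, mul_add,
          Finset.sum_add_distrib, ← mul_assoc, ← Finset.sum_mul] at hy
        have hupd : ∑ i ∈ s, Function.update c a (∑ i ∈ s, c i * f i x - φ x) i * f i y
            = ∑ i ∈ s, c i * f i y := by
          refine Finset.sum_congr rfl fun i hi => ?_
          rw [Function.update_of_ne (ne_of_mem_of_not_mem hi ha)]
        rw [Finset.sum_insert ha, hupd, Function.update_self]
        linarith

/-- Gale duality exchanges feasible and bounded chambers (Farkas form):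
`α` is `h`-feasible iff `⟨-h, ·⟩` is bounded above on the cone
`{u ∈ W : α e * u e ≥ 0 ∀ e}`, iff `⟨h, u⟩ ≥ 0` for every `u` in that cone. -/
theorem feasible_iff_bounded_gale_dual {E : Type*} [Fintype E]
    (W : Submodule ℝ (E → ℝ)) (h : E → ℝ) (α : E → ℝ)
    (hα : ∀ e, α e = 1 ∨ α e = -1) :
    (IsFeasible W h α ↔
      BddAbove ((fun u => dot (-h) u) '' {u : E → ℝ | u ∈ W ∧ ∀ e, 0 ≤ α e * u e})) ∧
    (IsFeasible W h α ↔
      ∀ u ∈ W, (∀ e, 0 ≤ α e * u e) → 0 ≤ dot h u) := by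
  have hsq : ∀ e, α e * α e = 1 := fun e => by rcases hα e with h | h <;> simp [h]
  have hdot_neg : ∀ u, dot (-h) u = -dot h u := fun u => by simp [dot]
  have hfeas : IsFeasible W h α ↔ ∀ u ∈ W, (∀ e, 0 ≤ α e * u e) → 0 ≤ dot h u := by
    constructor
    · rintro ⟨v, hv, hpos⟩ u hu hun
      have h0 : dot u (v - h) = 0 := hv u hu
      have h1 : dot u (v - h) = ∑ e, (α e * v e) * (α e * u e) - dot h u := by
        simp only [dot, ← Finset.sum_sub_distrib, Pi.sub_apply]
        refine Finset.sum_congr rfl fun e _ => ?_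
        linear_combination (-(u e * v e)) * hsq e
      have h2 : 0 ≤ ∑ e, (α e * v e) * (α e * u e) :=
        Finset.sum_nonneg fun e _ => mul_nonneg (hpos e) (hun e)
      linarith
    · intro H
      obtain ⟨c, hc, hsum⟩ := farkas (V := W) Finset.univ
        (fun e => α e • (LinearMap.proj e ∘ₗ W.subtype))
        ((∑ e, h e • LinearMap.proj e) ∘ₗ W.subtype) (by
          intro y hy
          have := H y y.2 (fun e => by simpa using hy e (Finset.mem_univ e))
          simpa [dot, LinearMap.sum_apply] using this)
      refine ⟨fun e => α e * c e, fun w hw => ?_, fun e => ?_⟩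
      · have := hsum ⟨w, hw⟩
        simp only [LinearMap.comp_apply, LinearMap.sum_apply, LinearMap.smul_apply,
          LinearMap.proj_apply, Submodule.subtype_apply, smul_eq_mul] at this
        rw [← sub_eq_zero, ← neg_eq_zero, neg_sub, ← Finset.sum_sub_distrib] at this
        rw [← this]
        refine Finset.sum_congr rfl fun e _ => ?_
        simp only [Pi.sub_apply]
        ring
      · rw [← mul_assoc, hsq, one_mul]
        exact hc e
  refine ⟨hfeas.trans ⟨fun H => ⟨0, ?_⟩, ?_⟩, hfeas⟩
  · rintro _ ⟨u, ⟨hu, hun⟩, rfl⟩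
    have := H u hu hun
    simp only [hdot_neg]
    linarith
  · rintro ⟨M, hM⟩ u hu hun
    by_contra! hneg
    -- This multiple of `u` stays in the cone and has value `|M| + 1 > M` under `⟨-h, ·⟩`.
    set t : ℝ := (|M| + 1) / (-dot h u) with ht
    have htpos : 0 ≤ t := div_nonneg (by positivity) (by linarith)
    have hle := hM ⟨t • u, ⟨W.smul_mem t hu, fun e => by
      have := mul_nonneg htpos (hun e)
      simp only [Pi.smul_apply, smul_eq_mul]
      linarith⟩, rfl⟩
    have hval : dot (-h) (t • u) = t * (-dot h u) := by
      rw [← hdot_neg]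
      simp only [dot, Finset.mul_sum, Pi.smul_apply, smul_eq_mul]
      exact Finset.sum_congr rfl fun e _ => by ring
    have htv : t * (-dot h u) = |M| + 1 := div_mul_cancel₀ _ (by linarith)
    simp only [hval, htv] at hle
    linarith [le_abs_self M]
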